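/- arXiv:2310.09775 — 2 statements merged into one kernel-verified Lean document; each statement's English description precedes it below -/
import Mathlib

section
/- Let a, b be natural numbers with a ≥ 2 and b ≥ 1. Then ∫_ℝ x/((x−i)^a·(x+i)^b) dx = 2πi·(−1)^{a−1}·i·(2i)^{1−a−b}·(C(a+b−2, a−1) − 2·C(a+b−3, a−2)), where (2i)^{1−a−b} denotes the integer power of 2i with exponent 1−a−b. -/
open MeasureTheory Complex

open Filter Asymptotics
open scoped Topology

/-!
For poles `z`, `w` in the upper and the lower half-plane put
`J a b = ∫ x : ℝ, ((x - z) ^ a * (x - w) ^ b)⁻¹`. Partial fractions give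
`(z - w) * J (a + 1) (b + 1) = J (a + 1) b - J a (b + 1)`, and integrating the derivative of the
integrand gives `a * J (a + 1) b + b * J a (b + 1) = 0` for `a + b > 0`. The two identities reduce
every `J (a + 1) (b + 1)` to `J 1 1 = 2πi / (z - w)`, in which the `2πi` is the jump between the
values at `±∞` of the primitive `log (x - z) - log (x - w)`. A factor `x = (x - z) + z` in the
numerator turns the integral into `J (a - 1) b + z * J a b`.
-/

section OnePole

variable {z w : ℂ}

lemma sub_mem_slitPlane_of_im_ne_zero (hz : z.im ≠ 0) (x : ℝ) : (x : ℂ) - z ∈ slitPlane :=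
  mem_slitPlane_iff.2 <| .inr <| by simpa using hz

lemma ofReal_sub_ne_zero_of_im_ne_zero (hz : z.im ≠ 0) (x : ℝ) : (x : ℂ) - z ≠ 0 :=
  slitPlane_ne_zero (sub_mem_slitPlane_of_im_ne_zero hz x)

lemma hasDerivAt_ofReal_sub (z : ℂ) (x : ℝ) : HasDerivAt (fun t : ℝ ↦ (t : ℂ) - z) 1 x :=
  (hasDerivAt_id x).ofReal_comp.sub_const z

lemma hasDerivAt_inv_ofReal_sub_pow (hz : z.im ≠ 0) (n : ℕ) (x : ℝ) :
    HasDerivAt (fun t : ℝ ↦ (((t : ℂ) - z) ^ n)⁻¹) (-(n * (((x : ℂ) - z) ^ (n + 1))⁻¹)) x := by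
  have hxz := ofReal_sub_ne_zero_of_im_ne_zero hz x
  refine (((hasDerivAt_ofReal_sub z x).fun_pow n).fun_inv (pow_ne_zero n hxz)).congr_deriv ?_
  rcases n with _ | n
  · simp
  · rw [Nat.add_sub_cancel]
    field_simp
    ring

lemma isBigO_inv_ofReal_sub (hz : z.im ≠ 0) :
    (fun x : ℝ ↦ ((x : ℂ) - z)⁻¹) =O[⊤] fun x : ℝ ↦ (1 + ‖x‖)⁻¹ := by
  refine IsBigO.inv_rev (.of_bound ((1 + ‖z‖) / |z.im| + 1) (.of_forall fun x ↦ ?_))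
    (.of_forall fun x hx ↦ absurd hx (by positivity))
  have h_im : |z.im| ≤ ‖(x : ℂ) - z‖ := by simpa using abs_im_le_norm ((x : ℂ) - z)
  have h_one : 1 ≤ ‖(x : ℂ) - z‖ / |z.im| := (one_le_div (abs_pos.2 hz)).2 h_im
  have h_norm : ‖x‖ ≤ ‖(x : ℂ) - z‖ + ‖z‖ := by simpa using norm_add_le ((x : ℂ) - z) z
  calc ‖1 + ‖x‖‖ = 1 + ‖x‖ := Real.norm_of_nonneg (by positivity)
    _ ≤ (1 + ‖z‖) * 1 + ‖(x : ℂ) - z‖ := by linarith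
    _ ≤ (1 + ‖z‖) * (‖(x : ℂ) - z‖ / |z.im|) + ‖(x : ℂ) - z‖ := by gcongr
    _ = ((1 + ‖z‖) / |z.im| + 1) * ‖(x : ℂ) - z‖ := by ring

lemma log_neg_of_im_pos {ζ : ℂ} (hζ : 0 < ζ.im) : log (-ζ) = log ζ - Real.pi * I := by
  simp only [log, norm_neg, arg_neg_eq_arg_sub_pi_of_im_pos hζ, ofReal_sub]
  ring

lemma log_neg_of_im_neg {ζ : ℂ} (hζ : ζ.im < 0) : log (-ζ) = log ζ + Real.pi * I := by
  simp only [log, norm_neg, arg_neg_eq_arg_add_pi_of_im_neg hζ, ofReal_add]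
  ring

lemma tendsto_log_ofReal_sub_sub_log_atTop (z : ℂ) :
    Tendsto (fun x : ℝ ↦ log (x - z) - Real.log x) atTop (𝓝 0) := by
  have h_quot : Tendsto (fun x : ℝ ↦ 1 - z * ((x⁻¹ : ℝ) : ℂ)) atTop (𝓝 1) := by
    simpa using ((continuous_ofReal.tendsto 0).comp tendsto_inv_atTop_zero).const_mul z
      |>.const_sub 1
  have h_log : Tendsto (fun x : ℝ ↦ log (1 - z * ((x⁻¹ : ℝ) : ℂ))) atTop (𝓝 0) := by
    simpa using h_quot.clog one_mem_slitPlane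
  refine h_log.congr' ?_
  filter_upwards [eventually_gt_atTop 0, h_quot.eventually_ne one_ne_zero] with x hx h_ne
  have h_factor : (x : ℂ) - z = x * (1 - z * ((x⁻¹ : ℝ) : ℂ)) := by
    have : (x : ℂ) ≠ 0 := ofReal_ne_zero.2 hx.ne'
    push_cast
    field_simp
  rw [h_factor, log_ofReal_mul hx h_ne, add_sub_cancel_left]

lemma tendsto_log_sub_log_atTop (z w : ℂ) :
    Tendsto (fun x : ℝ ↦ log (x - z) - log (x - w)) atTop (𝓝 0) := by
  simpa using (tendsto_log_ofReal_sub_sub_log_atTop z).sub (tendsto_log_ofReal_sub_sub_log_atTop w)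

lemma tendsto_log_sub_log_atBot (hz : 0 < z.im) (hw : w.im < 0) :
    Tendsto (fun x : ℝ ↦ log (x - z) - log (x - w)) atBot (𝓝 (-(2 * Real.pi * I))) := by
  have h_log_z (x : ℝ) : log (x - z) = log (-x + z) - Real.pi * I := by
    rw [← log_neg_of_im_pos (by simpa using hz), neg_add', neg_neg]
  have h_log_w (x : ℝ) : log (x - w) = log (-x + w) + Real.pi * I := by
    rw [← log_neg_of_im_neg (by simpa using hw), neg_add', neg_neg]
  have h_reflect : Tendsto (fun x : ℝ ↦ log (-x + z) - log (-x + w)) atBot (𝓝 0) := by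
    simpa [Function.comp_def] using
      (tendsto_log_sub_log_atTop (-z) (-w)).comp tendsto_neg_atBot_atTop
  rw [← zero_sub]
  refine (h_reflect.sub_const (2 * Real.pi * I)).congr fun x ↦ ?_
  rw [h_log_z, h_log_w]
  ring

end OnePole

/-- The rational function `1 / ((x - z) ^ a (x - w) ^ b)` on the real line, with poles at `z` and
`w`. Either exponent may be `0`, and then the corresponding pole is absent. -/
noncomputable def twoPoleKernel (z w : ℂ) (a b : ℕ) (x : ℝ) : ℂ :=
  (((x : ℂ) - z) ^ a * ((x : ℂ) - w) ^ b)⁻¹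

namespace twoPoleKernel

variable {z w : ℂ} {a b : ℕ}

lemma sub_mul_succ_succ (hz : z.im ≠ 0) (hw : w.im ≠ 0) (a b : ℕ) (x : ℝ) :
    (z - w) * twoPoleKernel z w (a + 1) (b + 1) x =
      twoPoleKernel z w (a + 1) b x - twoPoleKernel z w a (b + 1) x := by
  have hxz := ofReal_sub_ne_zero_of_im_ne_zero hz x
  have hxw := ofReal_sub_ne_zero_of_im_ne_zero hw x
  unfold twoPoleKernel
  field_simp
  ring

protected lemma continuous (hz : z.im ≠ 0) (hw : w.im ≠ 0) (a b : ℕ) :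
    Continuous (twoPoleKernel z w a b) :=
  Continuous.inv₀ (by fun_prop) fun x ↦
    mul_ne_zero (pow_ne_zero _ (ofReal_sub_ne_zero_of_im_ne_zero hz x))
      (pow_ne_zero _ (ofReal_sub_ne_zero_of_im_ne_zero hw x))

protected lemma hasDerivAt (hz : z.im ≠ 0) (hw : w.im ≠ 0) (a b : ℕ) (x : ℝ) :
    HasDerivAt (twoPoleKernel z w a b)
      (-(a * twoPoleKernel z w (a + 1) b x + b * twoPoleKernel z w a (b + 1) x)) x := by
  have h_mul := (hasDerivAt_inv_ofReal_sub_pow hz a x).fun_mul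
    (hasDerivAt_inv_ofReal_sub_pow hw b x)
  simp only [← mul_inv] at h_mul
  refine h_mul.congr_deriv ?_
  simp only [twoPoleKernel, mul_inv]
  ring

protected lemma isBigO (hz : z.im ≠ 0) (hw : w.im ≠ 0) {n : ℕ} (hn : n ≤ a + b) :
    twoPoleKernel z w a b =O[⊤] fun x : ℝ ↦ (1 + ‖x‖)⁻¹ ^ n := by
  have h_mul : twoPoleKernel z w a b =O[⊤] fun x : ℝ ↦ (1 + ‖x‖)⁻¹ ^ (a + b) :=
    (((isBigO_inv_ofReal_sub hz).pow a).mul ((isBigO_inv_ofReal_sub hw).pow b)).congr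
      (fun x ↦ by simp only [twoPoleKernel, inv_pow, mul_inv]) fun x ↦ (pow_add _ a b).symm
  refine h_mul.trans (.of_norm_le fun x ↦ ?_)
  rw [Real.norm_of_nonneg (by positivity)]
  exact pow_le_pow_of_le_one (by positivity)
    (inv_le_one_of_one_le₀ (le_add_of_nonneg_right (norm_nonneg x))) hn

protected lemma integrable (hz : z.im ≠ 0) (hw : w.im ≠ 0) (hab : 2 ≤ a + b) :
    Integrable (twoPoleKernel z w a b) := by
  refine (twoPoleKernel.isBigO hz hw hab).integrable
    (twoPoleKernel.continuous hz hw a b).aestronglyMeasurable ?_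
  have h_bracket : Integrable fun x : ℝ ↦ (1 + ‖x‖) ^ (-2 : ℝ) :=
    integrable_one_add_norm (by norm_num)
  refine h_bracket.congr (.of_forall fun x ↦ ?_)
  simp only [Real.rpow_neg (add_nonneg zero_le_one (norm_nonneg x)), Real.rpow_two, inv_pow]

lemma tendsto_cocompact (hz : z.im ≠ 0) (hw : w.im ≠ 0) (hab : 1 ≤ a + b) :
    Tendsto (twoPoleKernel z w a b) (cocompact ℝ) (𝓝 0) := by
  refine ((twoPoleKernel.isBigO hz hw hab).mono le_top).trans_tendsto ?_
  simpa only [pow_one] using!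
    tendsto_inv_atTop_zero.comp (tendsto_atTop_add_const_left _ 1 tendsto_norm_cocompact_atTop)

lemma sub_mul_integral_succ_succ (hz : z.im ≠ 0) (hw : w.im ≠ 0) (hab : 1 ≤ a + b) :
    (z - w) * ∫ x, twoPoleKernel z w (a + 1) (b + 1) x =
      (∫ x, twoPoleKernel z w (a + 1) b x) - ∫ x, twoPoleKernel z w a (b + 1) x := by
  rw [← integral_const_mul, ← integral_sub (twoPoleKernel.integrable hz hw (by omega))
    (twoPoleKernel.integrable hz hw (by omega))]
  simp only [sub_mul_succ_succ hz hw]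

lemma integral_by_parts (hz : z.im ≠ 0) (hw : w.im ≠ 0) (hab : 1 ≤ a + b) :
    a * (∫ x, twoPoleKernel z w (a + 1) b x) + b * ∫ x, twoPoleKernel z w a (b + 1) x = 0 := by
  have h_left := (twoPoleKernel.integrable (a := a + 1) (b := b) hz hw (by omega)).const_mul (a : ℂ)
  have h_right :=
    (twoPoleKernel.integrable (a := a) (b := b + 1) hz hw (by omega)).const_mul (b : ℂ)
  have h_lim := tendsto_cocompact hz hw hab
  have h_ftc := integral_of_hasDerivAt_of_tendsto (twoPoleKernel.hasDerivAt hz hw a b)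
    (h_left.add h_right).neg (h_lim.mono_left atBot_le_cocompact)
    (h_lim.mono_left atTop_le_cocompact)
  rwa [integral_neg, integral_add h_left h_right, integral_const_mul, integral_const_mul, sub_zero,
    neg_eq_zero] at h_ftc

lemma integral_one_one (hz : 0 < z.im) (hw : w.im < 0) :
    (z - w) * ∫ x, twoPoleKernel z w 1 1 x = 2 * Real.pi * I := by
  have h_deriv (x : ℝ) : HasDerivAt (fun t : ℝ ↦ log (t - z) - log (t - w))
      ((z - w) * twoPoleKernel z w 1 1 x) x := by
    have h_sub := ((hasDerivAt_ofReal_sub z x).clog_real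
      (sub_mem_slitPlane_of_im_ne_zero hz.ne' x)).sub
      ((hasDerivAt_ofReal_sub w x).clog_real (sub_mem_slitPlane_of_im_ne_zero hw.ne x))
    refine h_sub.congr_deriv ?_
    rw [sub_mul_succ_succ hz.ne' hw.ne 0 0 x]
    simp [twoPoleKernel]
  rw [← integral_const_mul, integral_of_hasDerivAt_of_tendsto h_deriv
    ((twoPoleKernel.integrable hz.ne' hw.ne le_rfl).const_mul _)
    (tendsto_log_sub_log_atBot hz hw) (tendsto_log_sub_log_atTop z w), zero_sub, neg_neg]

lemma integral_zero_left (hz : z.im ≠ 0) (hw : w.im ≠ 0) (n : ℕ) :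
    ∫ x, twoPoleKernel z w 0 (n + 2) x = 0 := by
  have h_parts := integral_by_parts (a := 0) (b := n + 1) hz hw (by omega)
  rw [Nat.cast_zero, zero_mul, zero_add] at h_parts
  exact (mul_eq_zero.1 h_parts).resolve_left (Nat.cast_ne_zero.2 n.succ_ne_zero)

lemma integral_one_succ (hz : 0 < z.im) (hw : w.im < 0) (n : ℕ) :
    (z - w) ^ (n + 1) * ∫ x, twoPoleKernel z w 1 (n + 1) x = 2 * Real.pi * I := by
  induction n with
  | zero => simpa using integral_one_one hz hw
  | succ n ih =>
    have h_rec := sub_mul_integral_succ_succ (a := 0) (b := n + 1) hz.ne' hw.ne (by omega)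
    rw [integral_zero_left hz.ne' hw.ne, sub_zero] at h_rec
    rw [pow_succ, mul_assoc, h_rec, ih]

theorem integral_succ_succ (hz : 0 < z.im) (hw : w.im < 0) (a b : ℕ) :
    (z - w) ^ (a + b + 1) * ∫ x, twoPoleKernel z w (a + 1) (b + 1) x =
      2 * Real.pi * I * (-1) ^ a * (a + b).choose a := by
  induction a generalizing b with
  | zero => simpa using integral_one_succ hz hw b
  | succ a ih =>
    have h_parts := integral_by_parts (a := a + 1) (b := b + 1) hz.ne' hw.ne (by omega)
    have h_choose : ((a + 1 + b).choose (a + 1) : ℂ) * (a + 1) =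
        (a + (b + 1)).choose a * (b + 1) := by
      rw [add_assoc, add_comm 1 b]
      exact_mod_cast (Nat.add_sub_cancel_left (n := a) (m := b + 1)) ▸
        Nat.choose_succ_right_eq (a + (b + 1)) a
    have ha : (a + 1 : ℂ) ≠ 0 := Nat.cast_add_one_ne_zero a
    refine mul_left_cancel₀ ha ?_
    push_cast at h_parts
    linear_combination (z - w) ^ (a + b + 2) * h_parts - (b + 1) * ih (b + 1) +
      2 * Real.pi * I * (-1) ^ a * h_choose

lemma integral_ofReal_mul_succ (hz : z.im ≠ 0) (hw : w.im ≠ 0) (hab : 2 ≤ a + b) :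
    ∫ x : ℝ, x * twoPoleKernel z w (a + 1) b x =
      (∫ x, twoPoleKernel z w a b x) + z * ∫ x, twoPoleKernel z w (a + 1) b x := by
  rw [← integral_const_mul, ← integral_add (twoPoleKernel.integrable hz hw hab)
    ((twoPoleKernel.integrable hz hw (by omega)).const_mul z)]
  congr 1 with x
  have hxz := ofReal_sub_ne_zero_of_im_ne_zero hz x
  have hxw := ofReal_sub_ne_zero_of_im_ne_zero hw x
  unfold twoPoleKernel
  field_simp
  ring

end twoPoleKernel

theorem stmt3_general {z w : ℂ} (hz : 0 < z.im) (hw : w.im < 0) (a b : ℕ) (ha : 2 ≤ a)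
    (hb : 1 ≤ b) :
    ∫ x : ℝ, (x : ℂ) / (((x : ℂ) - z) ^ a * ((x : ℂ) - w) ^ b) =
      2 * (Real.pi : ℂ) * I * (-1) ^ (a - 1) * (z - w) ^ ((1 : ℤ) - (a : ℤ) - (b : ℤ)) *
        (z * ((a + b - 2).choose (a - 1) : ℂ) -
          (z - w) * ((a + b - 3).choose (a - 2) : ℂ)) := by
  obtain ⟨a, rfl⟩ := Nat.exists_eq_add_of_le' ha
  obtain ⟨b, rfl⟩ := Nat.exists_eq_add_of_le' hb
  have hzw : z - w ≠ 0 := fun h ↦ by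
    have := congrArg im h
    simp only [sub_im, zero_im] at this
    linarith
  have h_exp : (1 : ℤ) - (a + 2 : ℕ) - (b + 1 : ℕ) = -(a + b + 2 : ℕ) := by push_cast; ring
  have h_low := twoPoleKernel.integral_succ_succ hz hw a b
  have h_high := twoPoleKernel.integral_succ_succ hz hw (a + 1) b
  have h_split := twoPoleKernel.integral_ofReal_mul_succ (a := a + 1) (b := b + 1) hz.ne' hw.ne
    (by omega)
  simp only [twoPoleKernel, ← div_eq_mul_inv] at h_split h_low h_high
  rw [h_split, h_exp, zpow_neg, zpow_natCast, show a + 2 + (b + 1) - 2 = a + 1 + b by omega,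
    show a + 2 + (b + 1) - 3 = a + b by omega, Nat.add_sub_cancel, Nat.add_sub_assoc one_le_two,
    mul_right_comm, ← div_eq_mul_inv, eq_div_iff (pow_ne_zero _ hzw)]
  linear_combination (z - w) * h_low + z * h_high

theorem stmt3 (a b : ℕ) (ha : 2 ≤ a) (hb : 1 ≤ b) :
    ∫ x : ℝ, (x : ℂ) / (((x : ℂ) - I) ^ a * ((x : ℂ) + I) ^ b) =
      2 * (Real.pi : ℂ) * I * (-1) ^ (a - 1) * I * (2 * I) ^ ((1 : ℤ) - (a : ℤ) - (b : ℤ)) *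
        (((a + b - 2).choose (a - 1) : ℂ) - 2 * ((a + b - 3).choose (a - 2) : ℂ)) := by
  have h := stmt3_general (z := I) (w := -I) (by simp) (by simp) a b ha hb
  simp only [sub_neg_eq_add, ← two_mul] at h
  linear_combination h
end

section
/- Let m be a natural number with m ≥ 1. Then ∫_ℝ ((4m−2)·x² − 2)/((x−i)^{m+2}·(x+i)^{m+1}) dx = (2πi/(m+1)!) · g^{(m+1)}(i), where g : ℂ → ℂ is g(z) = ((4m−2)·z² − 2)/(z+i)^{m+1}. -/
open MeasureTheory Complex

open Filter Asymptotics Bornology Polynomial Topology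

/-!
Expanding the numerator at the pole `w'` of the lower half-plane reduces the residue formula to the
integrals `∫ (x - w)^(-(n + 1)) * (x - w')^j` with `j : ℤ` and `j < n`. Integration by parts lowers
`n` and `j` together and differentiates `(z - w')^j` on the other side. For `n = 0`, the identity
`(x - w)⁻¹ * (x - w')^(j - 1) * (w - w') = (x - w)⁻¹ * (x - w')^j - (x - w')^(j - 1)` reduces
everything to `j = -1`, where there is a logarithmic primitive.
-/

theorem zpow_isBigO_zpow_cobounded {𝕜 : Type*} [NormedDivisionRing 𝕜] {a b : ℤ} (hab : a ≤ b) :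
    (fun x : 𝕜 ↦ x ^ a) =O[cobounded 𝕜] fun x ↦ x ^ b := by
  refine .of_bound' ?_
  filter_upwards [tendsto_norm_cobounded_atTop.eventually_ge_atTop 1] with x hx
  simpa only [norm_zpow] using zpow_le_zpow_right₀ hx hab

section RealLine

variable {w w' : ℂ} {a b : ℤ}

theorem ofReal_sub_ne_zero_of_im_ne_zero_s4 (hw : w.im ≠ 0) (x : ℝ) : (x : ℂ) - w ≠ 0 :=
  fun h ↦ hw (by simpa using congrArg im h)

theorem ofReal_sub_isTheta_cobounded (w : ℂ) :
    (fun x : ℝ ↦ (x : ℂ) - w) =Θ[cobounded ℝ] fun x : ℝ ↦ x := by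
  have hconst : (fun _ : ℝ ↦ -w) =o[cobounded ℝ] fun x : ℝ ↦ (x : ℂ) :=
    isLittleO_ofReal_right.2 (isLittleO_const_id_cobounded (-w))
  simp only [sub_eq_add_neg]
  exact hconst.right_isTheta_add'.symm.trans (isTheta_ofReal (fun x : ℝ ↦ x) (cobounded ℝ))

theorem zpow_sub_mul_zpow_sub_isTheta_cobounded (w w' : ℂ) (a b : ℤ) :
    (fun x : ℝ ↦ ((x : ℂ) - w) ^ a * ((x : ℂ) - w') ^ b) =Θ[cobounded ℝ]
      fun x : ℝ ↦ x ^ (a + b) := by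
  refine (((ofReal_sub_isTheta_cobounded w).zpow a).mul
    ((ofReal_sub_isTheta_cobounded w').zpow b)).trans_eventuallyEq ?_
  filter_upwards [eventually_ne_cobounded (0 : ℝ)] with x hx
  exact (zpow_add₀ hx a b).symm

theorem tendsto_zpow_sub_mul_zpow_sub_cobounded (hab : a + b < 0) :
    Tendsto (fun x : ℝ ↦ ((x : ℂ) - w) ^ a * ((x : ℂ) - w') ^ b) (cobounded ℝ) (𝓝 0) := by
  have hO := (zpow_sub_mul_zpow_sub_isTheta_cobounded w w' a b).isBigO.trans
    (zpow_isBigO_zpow_cobounded (show a + b ≤ -1 by lia))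
  simp only [zpow_neg_one] at hO
  exact hO.trans_tendsto tendsto_inv₀_cobounded

theorem zpow_neg_two_isBigO_inv_one_add_sq :
    (fun x : ℝ ↦ x ^ (-2 : ℤ)) =O[cobounded ℝ] fun x ↦ (1 + x ^ 2)⁻¹ := by
  have hconst : (fun _ : ℝ ↦ (1 : ℝ)) =o[cobounded ℝ] fun x ↦ x ^ 2 := by
    simpa using isLittleO_pow_pow_cobounded_of_lt (R := ℝ) (show 0 < 2 by norm_num)
  exact hconst.right_isTheta_add.inv.isBigO

theorem continuous_zpow_sub_mul_zpow_sub (hw : w.im ≠ 0) (hw' : w'.im ≠ 0) :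
    Continuous fun x : ℝ ↦ ((x : ℂ) - w) ^ a * ((x : ℂ) - w') ^ b :=
  ((continuous_ofReal.sub continuous_const).zpow₀ a
      fun x ↦ .inl (ofReal_sub_ne_zero_of_im_ne_zero_s4 hw x)).mul
    ((continuous_ofReal.sub continuous_const).zpow₀ b
      fun x ↦ .inl (ofReal_sub_ne_zero_of_im_ne_zero_s4 hw' x))

theorem integrable_zpow_sub_mul_zpow_sub (hw : w.im ≠ 0) (hw' : w'.im ≠ 0) (hab : a + b ≤ -2) :
    Integrable fun x : ℝ ↦ ((x : ℂ) - w) ^ a * ((x : ℂ) - w') ^ b := by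
  have hO := ((zpow_sub_mul_zpow_sub_isTheta_cobounded w w' a b).isBigO.trans
    (zpow_isBigO_zpow_cobounded hab)).trans zpow_neg_two_isBigO_inv_one_add_sq
  rw [Metric.cobounded_eq_cocompact] at hO
  exact (continuous_zpow_sub_mul_zpow_sub hw hw').locallyIntegrable.integrable_of_isBigO_cocompact
    hO (integrable_inv_one_add_sq.integrableAtFilter _)

theorem hasDerivAt_ofReal_sub_zpow (hw : w.im ≠ 0) (a : ℤ) (x : ℝ) :
    HasDerivAt (fun x : ℝ ↦ ((x : ℂ) - w) ^ a) (a * ((x : ℂ) - w) ^ (a - 1)) x :=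
  ((hasDerivAt_zpow a _ (.inl (ofReal_sub_ne_zero_of_im_ne_zero_s4 hw x))).comp_sub_const
    (x : ℂ) w).comp_ofReal

theorem mul_integral_zpow_sub_mul_zpow_sub (hw : w.im ≠ 0) (hw' : w'.im ≠ 0) (hab : a + b < 0) :
    b * ∫ x : ℝ, ((x : ℂ) - w) ^ a * ((x : ℂ) - w') ^ (b - 1) =
      -(a * ∫ x : ℝ, ((x : ℂ) - w) ^ (a - 1) * ((x : ℂ) - w') ^ b) := by
  have hlim := tendsto_zpow_sub_mul_zpow_sub_cobounded (w := w) (w' := w') hab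
  have hparts := integral_mul_deriv_eq_deriv_mul
    (fun x _ ↦ hasDerivAt_ofReal_sub_zpow hw a x) (fun x _ ↦ hasDerivAt_ofReal_sub_zpow hw' b x)
    (((integrable_zpow_sub_mul_zpow_sub (b := b - 1) hw hw' (by lia)).const_mul (b : ℂ)).congr
      (.of_forall fun x ↦ mul_left_comm _ _ _))
    (((integrable_zpow_sub_mul_zpow_sub (a := a - 1) hw hw' (by lia)).const_mul (a : ℂ)).congr
      (.of_forall fun x ↦ (mul_assoc _ _ _).symm))
    (hlim.mono_left IsOrderBornology.atBot_le_cobounded)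
    (hlim.mono_left IsOrderBornology.atTop_le_cobounded)
  simpa only [mul_left_comm _ (b : ℂ), mul_assoc, integral_const_mul, sub_zero, zero_sub]
    using hparts

theorem integral_zpow_sub_eq_zero (hw : w.im ≠ 0) (hb : b ≤ -2) :
    ∫ x : ℝ, ((x : ℂ) - w) ^ b = 0 := by
  have hparts := mul_integral_zpow_sub_mul_zpow_sub (a := 0) (b := b + 1) hw hw (by lia)
  have hb' : ((b + 1 : ℤ) : ℂ) ≠ 0 := Int.cast_ne_zero.2 (by lia)
  simpa [-Int.cast_add, hb'] using hparts

theorem tendsto_log_mul_ofReal_sub_sub_log {s : ℂ} (hs : s ∈ slitPlane) (w : ℂ) :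
    Tendsto (fun x : ℝ ↦ log (s * (x - w)) - Real.log x) atTop (𝓝 (log s)) := by
  have hinner : Tendsto (fun x : ℝ ↦ s * (1 - w * (x : ℂ)⁻¹)) atTop (𝓝 s) := by
    have hinv : Tendsto (fun x : ℝ ↦ (x : ℂ)⁻¹) atTop (𝓝 0) :=
      tendsto_inv₀_cobounded.comp (RCLike.tendsto_ofReal_atTop_cobounded ℂ)
    simpa using ((hinv.const_mul w).const_sub 1).const_mul s
  refine (hinner.clog hs).congr' ?_
  filter_upwards [eventually_gt_atTop 0, hinner.eventually_ne (slitPlane_ne_zero hs)] with x hx hne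
  have hfactor : s * (x - w) = x * (s * (1 - w * (x : ℂ)⁻¹)) := by
    have : (x : ℂ) ≠ 0 := ofReal_ne_zero.2 hx.ne'
    field_simp
  rw [hfactor, log_ofReal_mul hx hne, add_sub_cancel_left]

theorem tendsto_log_mul_sub_sub_log_mul_sub {s t : ℂ} (hs : s ∈ slitPlane) (ht : t ∈ slitPlane)
    (w w' : ℂ) :
    Tendsto (fun x : ℝ ↦ log (s * (x - w)) - log (t * (x - w'))) atTop (𝓝 (log s - log t)) := by
  simpa using (tendsto_log_mul_ofReal_sub_sub_log hs w).sub
    (tendsto_log_mul_ofReal_sub_sub_log ht w')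

theorem hasDerivAt_log_sub_log (hw : 0 < w.im) (hw' : w'.im < 0) (x : ℝ) :
    HasDerivAt (fun x : ℝ ↦ log (I * (x - w)) - log (-I * (x - w')))
      ((w - w') * (((x : ℂ) - w)⁻¹ * ((x : ℂ) - w')⁻¹)) x := by
  -- The factors `I` and `-I` rotate the lines traced by the two linear factors into the right
  -- half-plane, away from the branch cut of `log`.
  have hlog (c z : ℂ) (hre : 0 < (c * (x - z)).re) :
      HasDerivAt (fun x : ℝ ↦ log (c * (x - z))) (c / (c * (x - z))) x := by
    have hlin : HasDerivAt (fun x : ℝ ↦ c * ((x : ℂ) - z)) c x := by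
      simpa using ((hasDerivAt_id x).ofReal_comp.sub_const z).const_mul c
    exact hlin.clog_real (.inl hre)
  have hx := ofReal_sub_ne_zero_of_im_ne_zero_s4 hw.ne' x
  have hx' := ofReal_sub_ne_zero_of_im_ne_zero_s4 hw'.ne x
  refine ((hlog I w (by simpa using hw)).sub (hlog (-I) w' (by simpa using hw'))).congr_deriv ?_
  have hI := I_ne_zero
  field_simp
  ring

theorem integral_inv_sub_mul_inv_sub (hw : 0 < w.im) (hw' : w'.im < 0) :
    ∫ x : ℝ, ((x : ℂ) - w)⁻¹ * ((x : ℂ) - w')⁻¹ = 2 * Real.pi * I / (w - w') := by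
  have hI : I ∈ slitPlane := by simp [mem_slitPlane_iff]
  have hnegI : -I ∈ slitPlane := by simp [mem_slitPlane_iff]
  have htop := tendsto_log_mul_sub_sub_log_mul_sub hI hnegI w w'
  have hbot : Tendsto (fun x : ℝ ↦ log (I * (x - w)) - log (-I * (x - w'))) atBot
      (𝓝 (log (-I) - log I)) := by
    refine ((tendsto_log_mul_sub_sub_log_mul_sub hnegI hI (-w) (-w')).comp
      tendsto_neg_atBot_atTop).congr fun x ↦ ?_
    simp only [Function.comp_apply, ofReal_neg]
    congr 2 <;> ring
  have hintegrable : Integrable fun x : ℝ ↦ ((x : ℂ) - w)⁻¹ * ((x : ℂ) - w')⁻¹ := by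
    simpa only [zpow_neg_one] using
      integrable_zpow_sub_mul_zpow_sub (a := -1) (b := -1) hw.ne' hw'.ne (by norm_num)
  have hFTC := integral_of_hasDerivAt_of_tendsto (hasDerivAt_log_sub_log hw hw')
    (hintegrable.const_mul _) hbot htop
  have hne : w - w' ≠ 0 := sub_ne_zero.2 (ne_of_apply_ne im (hw'.trans hw).ne')
  rw [integral_const_mul, log_I, log_neg_I] at hFTC
  rw [eq_div_iff hne]
  linear_combination hFTC

theorem integral_inv_sub_mul_zpow_sub (hw : 0 < w.im) (hw' : w'.im < 0) (hb : b ≤ -1) :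
    ∫ x : ℝ, ((x : ℂ) - w)⁻¹ * ((x : ℂ) - w') ^ b = 2 * Real.pi * I * (w - w') ^ b := by
  have hne : w - w' ≠ 0 := sub_ne_zero.2 (ne_of_apply_ne im (hw'.trans hw).ne')
  induction b, hb using Int.leInductionDown with
  | base =>
    simpa only [zpow_neg_one, ← div_eq_mul_inv] using integral_inv_sub_mul_inv_sub hw hw'
  | pred b hb ih =>
    have hsplit (x : ℝ) : ((x : ℂ) - w)⁻¹ * ((x : ℂ) - w') ^ (b - 1) =
        (w - w')⁻¹ * (((x : ℂ) - w)⁻¹ * ((x : ℂ) - w') ^ b - ((x : ℂ) - w') ^ (b - 1)) := by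
      have hx := ofReal_sub_ne_zero_of_im_ne_zero_s4 hw.ne' x
      have hx' := ofReal_sub_ne_zero_of_im_ne_zero_s4 hw'.ne x
      rw [zpow_sub_one₀ hx']
      field_simp
      ring
    have hintegrable : Integrable fun x : ℝ ↦ ((x : ℂ) - w)⁻¹ * ((x : ℂ) - w') ^ b := by
      simpa only [zpow_neg_one] using
        integrable_zpow_sub_mul_zpow_sub (a := -1) (b := b) hw.ne' hw'.ne (by lia)
    have hintegrable' : Integrable fun x : ℝ ↦ ((x : ℂ) - w') ^ (b - 1) := by
      simpa only [zpow_zero, one_mul] using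
        integrable_zpow_sub_mul_zpow_sub (a := 0) (b := b - 1) hw.ne' hw'.ne (by lia)
    simp only [hsplit]
    rw [integral_const_mul, integral_sub hintegrable hintegrable', ih,
      integral_zpow_sub_eq_zero hw'.ne (by lia), zpow_sub_one₀ hne]
    ring

theorem deriv_zpow_sub (w : ℂ) (b : ℤ) :
    deriv (fun z : ℂ ↦ (z - w) ^ b) = fun z ↦ b * (z - w) ^ (b - 1) := by
  funext z
  rw [deriv_comp_sub_const (f := fun z : ℂ ↦ z ^ b), deriv_zpow]

theorem integral_zpow_sub_mul_zpow_sub_eq_iteratedDeriv (hw : 0 < w.im) (hw' : w'.im < 0) {n : ℕ}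
    (hb : b < n) :
    ∫ x : ℝ, ((x : ℂ) - w) ^ (-(n + 1 : ℤ)) * ((x : ℂ) - w') ^ b =
      2 * Real.pi * I / n.factorial * iteratedDeriv n (fun z : ℂ ↦ (z - w') ^ b) w := by
  induction n generalizing b with
  | zero => simpa using integral_inv_sub_mul_zpow_sub hw hw' (by lia : b ≤ -1)
  | succ n ih =>
    have hparts := mul_integral_zpow_sub_mul_zpow_sub (a := -(n + 1 : ℤ)) (b := b)
      hw.ne' hw'.ne (by lia)
    rw [ih (by lia), show -(n + 1 : ℤ) - 1 = -((n + 1 : ℕ) + 1 : ℤ) by push_cast; ring] at hparts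
    rw [iteratedDeriv_succ', deriv_zpow_sub, iteratedDeriv_const_mul_field, Nat.factorial_succ]
    have hn : (n : ℂ) + 1 ≠ 0 := Nat.cast_add_one_ne_zero n
    have hfact : (n.factorial : ℂ) ≠ 0 := Nat.cast_ne_zero.2 n.factorial_ne_zero
    push_cast at hparts ⊢
    field_simp at hparts ⊢
    linear_combination -hparts

theorem eval_div_pow_sub_eq_sum_taylor (p : ℂ[X]) (b : ℕ) {z : ℂ} (hz : z ≠ w) :
    p.eval z / (z - w) ^ b =
      ∑ k ∈ Finset.range (p.natDegree + 1), (taylor w p).coeff k * (z - w) ^ (k - b : ℤ) := by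
  have hz' : z - w ≠ 0 := sub_ne_zero.2 hz
  rw [← taylor_eval_sub w, eval_eq_sum_range, natDegree_taylor, Finset.sum_div]
  refine Finset.sum_congr rfl fun k _ ↦ ?_
  rw [zpow_sub₀ hz', zpow_natCast, zpow_natCast, mul_div_assoc]

theorem iteratedDeriv_eval_div_pow_sub (p : ℂ[X]) (n b : ℕ) (hne : w ≠ w') :
    iteratedDeriv n (fun z : ℂ ↦ p.eval z / (z - w') ^ b) w =
      ∑ k ∈ Finset.range (p.natDegree + 1),
        (taylor w' p).coeff k * iteratedDeriv n (fun z : ℂ ↦ (z - w') ^ (k - b : ℤ)) w := by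
  have hexpand : (fun z : ℂ ↦ p.eval z / (z - w') ^ b) =ᶠ[𝓝 w] fun z ↦
      ∑ k ∈ Finset.range (p.natDegree + 1), (taylor w' p).coeff k * (z - w') ^ (k - b : ℤ) := by
    filter_upwards [eventually_ne_nhds hne] with z hz
    exact eval_div_pow_sub_eq_sum_taylor p b hz
  have hsmooth (j : ℤ) : ContDiffAt ℂ n (fun z : ℂ ↦ (z - w') ^ j) w :=
    ((analyticAt_id.fun_sub analyticAt_const).fun_zpow (sub_ne_zero.2 hne)).contDiffAt
  rw [hexpand.iteratedDeriv_eq, iteratedDeriv_fun_sum fun k _ ↦ contDiffAt_const.mul (hsmooth _)]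
  simp only [iteratedDeriv_const_mul_field]

theorem integral_eval_div_pow_sub_mul_pow_sub (hw : 0 < w.im) (hw' : w'.im < 0) (p : ℂ[X])
    {n b : ℕ} (hp : p.natDegree < n + b) :
    ∫ x : ℝ, p.eval (x : ℂ) / (((x : ℂ) - w) ^ (n + 1) * ((x : ℂ) - w') ^ b) =
      2 * Real.pi * I / n.factorial *
        iteratedDeriv n (fun z : ℂ ↦ p.eval z / (z - w') ^ b) w := by
  have hdeg {k : ℕ} (hk : k ∈ Finset.range (p.natDegree + 1)) : (k - b : ℤ) < n := by
    have := Finset.mem_range.1 hk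
    lia
  have hexpand (x : ℝ) : p.eval (x : ℂ) / (((x : ℂ) - w) ^ (n + 1) * ((x : ℂ) - w') ^ b) =
      ∑ k ∈ Finset.range (p.natDegree + 1), (taylor w' p).coeff k *
        (((x : ℂ) - w) ^ (-(n + 1 : ℤ)) * ((x : ℂ) - w') ^ (k - b : ℤ)) := by
    rw [mul_comm, ← div_div, eval_div_pow_sub_eq_sum_taylor p b
      (sub_ne_zero.1 (ofReal_sub_ne_zero_of_im_ne_zero_s4 hw'.ne x)), Finset.sum_div]
    refine Finset.sum_congr rfl fun k _ ↦ ?_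
    rw [zpow_neg, ← Nat.cast_add_one, zpow_natCast]
    ring
  have hne : w ≠ w' := ne_of_apply_ne im (hw'.trans hw).ne'
  simp only [hexpand]
  rw [integral_finsetSum _ fun k hk ↦ (integrable_zpow_sub_mul_zpow_sub hw.ne' hw'.ne
      (by have := hdeg hk; lia)).const_mul _,
    iteratedDeriv_eval_div_pow_sub p n b hne, Finset.mul_sum]
  refine Finset.sum_congr rfl fun k hk ↦ ?_
  rw [integral_const_mul, integral_zpow_sub_mul_zpow_sub_eq_iteratedDeriv hw hw' (hdeg hk)]
  ring

end RealLine

theorem stmt4 (m : ℕ) (hm : 1 ≤ m) :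
    ∫ x : ℝ, ((4 * (m : ℂ) - 2) * (x : ℂ) ^ 2 - 2) /
        (((x : ℂ) - I) ^ (m + 2) * ((x : ℂ) + I) ^ (m + 1)) =
      (2 * (Real.pi : ℂ) * I / (Nat.factorial (m + 1) : ℂ)) *
        iteratedDeriv (m + 1)
          (fun z : ℂ => ((4 * (m : ℂ) - 2) * z ^ 2 - 2) / (z + I) ^ (m + 1)) I := by
  let p : ℂ[X] := C (4 * (m : ℂ) - 2) * X ^ 2 - C 2
  have hdeg : p.natDegree ≤ 2 := by unfold p; compute_degree
  have heval (z : ℂ) : p.eval z = (4 * (m : ℂ) - 2) * z ^ 2 - 2 := by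
    simp only [p, eval_sub, eval_mul, eval_pow, eval_C, eval_X]
  simpa only [heval, sub_neg_eq_add] using integral_eval_div_pow_sub_mul_pow_sub
    (w := I) (w' := -I) (by simp) (by simp) p (n := m + 1) (b := m + 1) (by lia)
end
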